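/- arXiv:2604.09977 — 4 statements merged into one kernel-verified Lean document; each statement's English description precedes it below -/
import Mathlib

section
/- Let n ∈ ℕ with n ≥ 1, let x_0, x_1, …, x_n be pairwise distinct nonzero complex numbers, and let s ∈ ℤ with s ≤ −1. Then ∑_{j=0}^{n} x_j^s / ∏_{l=0, l≠j}^{n} (x_j − x_l) = ((−1)^n / ∏_{j=0}^{n} x_j) · g_{|s|−1}(1/x_0, 1/x_1, …, 1/x_n). -/
/-!
Substituting `u j = (x j)⁻¹` turns each denominator `∏ (x j - x l)` into
`(-1) ^ n * ∏ (u j - u l)` divided by `u j ^ (n - 1) * ∏ u l` (product over all `l`), so the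
left side equals `(-1) ^ n * ∏ u l` times `∑ j, u j ^ (|s| - 1 + n) / ∏ (u j - u l)`.
It remains to see that `∑ j, u j ^ (l + n) / ∏ (u j - u l)` is the complete homogeneous polynomial
of degree `l` in the `n + 1` variables `u j` (`dividedDiff_eq_completeHomog`). Both sides satisfy
the recurrence `F (l + 1) (a, u) = a * F l (a, u) + F (l + 1) u`
(`dividedDiff_succ`, `completeHomog_cons_succ`), and for `l = 0` the sum is the leading coefficient
of `X ^ n` read off from Lagrange interpolation at the points `u j`.
-/

/-- The complete homogeneous symmetric polynomial of degree `l`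
in the variables `u 0, …, u (m-1)`. -/
noncomputable def completeHomog {m : ℕ} (l : ℕ) (u : Fin m → ℂ) : ℂ :=
  ∑ d ∈ Finset.Nat.antidiagonalTuple m l, ∏ i, u i ^ d i

/-- The divided difference of the monomial `X ^ k` at the points `u 0, …, u (m-1)`,
written by its closed formula, which is meaningful only when the points are distinct. -/
noncomputable def dividedDiff {m : ℕ} (k : ℕ) (u : Fin m → ℂ) : ℂ :=
  ∑ j, u j ^ k / ∏ l ∈ Finset.univ.erase j, (u j - u l)

lemma completeHomog_zero {m : ℕ} (u : Fin m → ℂ) : completeHomog 0 u = 1 := by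
  simp [completeHomog, Finset.Nat.antidiagonalTuple_zero_right]

lemma completeHomog_cons {m : ℕ} (l : ℕ) (a : ℂ) (u : Fin m → ℂ) :
    completeHomog l (Fin.cons a u : Fin (m + 1) → ℂ) =
      ∑ p ∈ Finset.HasAntidiagonal.antidiagonal l, a ^ p.1 * completeHomog p.2 u := by
  have key : ∀ f : (Fin (m + 1) → ℕ) → ℂ, ∑ d ∈ Finset.Nat.antidiagonalTuple (m + 1) l, f d =
      ∑ p ∈ Finset.HasAntidiagonal.antidiagonal l, ∑ d ∈ Finset.Nat.antidiagonalTuple m p.2,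
        f (Fin.cons p.1 d) := by
    intro f
    rw [Finset.sum_sigma']
    refine Finset.sum_bij' (fun d _ => ⟨(d 0, ∑ i, Fin.tail d i), Fin.tail d⟩)
      (fun q _ => Fin.cons q.1.1 q.2) ?_ ?_ ?_ ?_ ?_
    · intro d hd
      simp only [Finset.Nat.mem_antidiagonalTuple, Fin.sum_univ_succ] at hd
      simp [Finset.Nat.mem_antidiagonalTuple, Fin.tail, hd]
    · rintro ⟨⟨i, j⟩, d⟩ hd
      simp only [Finset.mem_sigma, Finset.HasAntidiagonal.mem_antidiagonal,
        Finset.Nat.mem_antidiagonalTuple] at hd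
      simp [Finset.Nat.mem_antidiagonalTuple, Fin.sum_univ_succ, hd]
    · intro d _
      simp
    · rintro ⟨⟨i, j⟩, d⟩ hd
      simp only [Finset.mem_sigma, Finset.HasAntidiagonal.mem_antidiagonal,
        Finset.Nat.mem_antidiagonalTuple] at hd
      simp [hd]
    · intro d _
      simp
  simp only [completeHomog, key, Finset.mul_sum, Fin.prod_univ_succ, Fin.cons_zero, Fin.cons_succ]

lemma completeHomog_cons_succ {m : ℕ} (l : ℕ) (a : ℂ) (u : Fin m → ℂ) :
    completeHomog (l + 1) (Fin.cons a u : Fin (m + 1) → ℂ) =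
      a * completeHomog l (Fin.cons a u : Fin (m + 1) → ℂ) + completeHomog (l + 1) u := by
  rw [completeHomog_cons, completeHomog_cons, Finset.Nat.sum_antidiagonal_succ, Finset.mul_sum,
    add_comm]
  simp [pow_succ', mul_assoc]

lemma completeHomog_one_var (l : ℕ) (u : Fin 1 → ℂ) : completeHomog l u = u 0 ^ l := by
  simp [completeHomog]

/-- Multiplying the monomial by `X - a` cancels the factor `u j - a` of each denominator and kills
the term of the node `a`. -/
lemma dividedDiff_succ {m : ℕ} (k : ℕ) (a : ℂ) (u : Fin m → ℂ) (ha : ∀ j, u j ≠ a) :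
    dividedDiff (k + 1) (Fin.cons a u : Fin (m + 1) → ℂ) =
      a * dividedDiff k (Fin.cons a u : Fin (m + 1) → ℂ) + dividedDiff k u := by
  have herase : ∀ j : Fin m, ∏ l ∈ Finset.univ.erase j.succ,
      (u j - (Fin.cons a u : Fin (m + 1) → ℂ) l) =
      (u j - a) * ∏ l ∈ Finset.univ.erase j, (u j - u l) := by
    intro j
    have : (Finset.univ.erase j.succ : Finset (Fin (m + 1))) =
        Finset.cons 0 ((Finset.univ.erase j).map (Fin.succEmb m)) (by simp) := by
      ext i
      refine Fin.cases ?_ (fun i => ?_) i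
      · simp [(Fin.succ_ne_zero j).symm]
      · simp
    rw [this, Finset.prod_cons, Finset.prod_map]
    simp
  simp only [dividedDiff, Fin.sum_univ_succ, Fin.cons_zero, Fin.cons_succ, herase, mul_add,
    Finset.mul_sum]
  rw [add_assoc, ← Finset.sum_add_distrib]
  congr 1
  · ring
  · refine Finset.sum_congr rfl fun j _ => ?_
    have h := sub_ne_zero.2 (ha j)
    rw [← div_div, ← div_div, mul_div_assoc', ← add_div]
    congr 1
    field_simp
    ring

lemma dividedDiff_top (n : ℕ) (u : Fin (n + 1) → ℂ) (hu : Function.Injective u) :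
    dividedDiff n u = 1 := by
  have h := Lagrange.leadingCoeff_eq_sum (s := Finset.univ) (v := u)
    (P := (Polynomial.X ^ n : Polynomial ℂ)) hu.injOn (by simp)
  simpa [dividedDiff] using h.symm

lemma dividedDiff_eq_completeHomog (n l : ℕ) (u : Fin (n + 1) → ℂ) (hu : Function.Injective u) :
    dividedDiff (l + n) u = completeHomog l u := by
  induction n generalizing l with
  | zero => simp [dividedDiff, completeHomog_one_var]
  | succ n ihn =>
    induction l with
    | zero => rw [zero_add, dividedDiff_top _ _ hu, completeHomog_zero]
    | succ l ihl =>
      obtain ⟨a, v, rfl⟩ : ∃ a v, u = Fin.cons a v := ⟨u 0, Fin.tail u, by simp⟩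
      obtain ⟨ha, hv⟩ := Fin.cons_injective_iff.1 hu
      rw [completeHomog_cons_succ, ← ihl, ← ihn (l + 1) v hv,
        show l + 1 + (n + 1) = (l + (n + 1)) + 1 by ring,
        dividedDiff_succ _ _ _ fun j h => ha ⟨j, h⟩, show l + 1 + n = l + (n + 1) by ring]

theorem stmt_0 (n : ℕ) (hn : 1 ≤ n) (x : Fin (n + 1) → ℂ)
    (hinj : Function.Injective x) (hx0 : ∀ j, x j ≠ 0)
    (s : ℤ) (hs : s ≤ -1) :
    ∑ j, x j ^ s / ∏ l ∈ Finset.univ.erase j, (x j - x l) =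
      ((-1) ^ n / ∏ j, x j) *
        completeHomog (s.natAbs - 1) (fun j => (x j)⁻¹) := by
  obtain ⟨k, rfl⟩ : ∃ k : ℕ, s = -((k + 1 : ℕ) : ℤ) := ⟨(-s - 1).toNat, by omega⟩
  have hk : (-((k + 1 : ℕ) : ℤ)).natAbs - 1 = k := by omega
  rw [hk, ← dividedDiff_eq_completeHomog n k (fun j => (x j)⁻¹) (inv_injective.comp hinj), dividedDiff, Finset.mul_sum]
  refine Finset.sum_congr rfl fun j _ => ?_
  have hcard : (Finset.univ.erase j).card = n := by simp
  have hj := hx0 j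
  have hP : ∏ l ∈ Finset.univ.erase j, x l ≠ 0 := Finset.prod_ne_zero_iff.2 fun l _ => hx0 l
  have hD : ∏ l ∈ Finset.univ.erase j, (x j - x l) ≠ 0 :=
    Finset.prod_ne_zero_iff.2 fun l hl =>
      sub_ne_zero.2 fun h => (Finset.ne_of_mem_erase hl) (hinj h).symm
  have hE : ∏ l ∈ Finset.univ.erase j, ((x j)⁻¹ - (x l)⁻¹) =
      (-1) ^ n * (∏ l ∈ Finset.univ.erase j, (x j - x l)) /
        (x j ^ n * ∏ l ∈ Finset.univ.erase j, x l) := by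
    have : ∀ l ∈ Finset.univ.erase j, (x j)⁻¹ - (x l)⁻¹ = (-1) * (x j - x l) / (x j * x l) := by
      intro l _
      have := hx0 l
      field_simp
      ring
    rw [Finset.prod_congr rfl this, Finset.prod_div_distrib, Finset.prod_mul_distrib,
      Finset.prod_mul_distrib, Finset.prod_const, Finset.prod_const, hcard]
  rw [hE, ← Finset.mul_prod_erase _ _ (Finset.mem_univ j), zpow_neg, zpow_natCast, inv_pow]
  field_simp
  ring
end

section
/- Let n ∈ ℕ with n ≥ 1, let k ∈ ℕ (k ≥ 0), and let x_0, x_1, …, x_n be pairwise distinct complex numbers. Then ∑_{j=0}^{n} x_j^{n+k} / ∏_{l=0, l≠j}^{n} (x_j − x_l) = g_k(x_0, x_1, …, x_n). -/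
theorem completeHomog_succ {m : ℕ} (k : ℕ) (x : Fin (m + 1) → ℂ) :
    completeHomog k x =
      ∑ p ∈ Finset.HasAntidiagonal.antidiagonal k,
        x 0 ^ p.1 * completeHomog p.2 (fun i => x i.succ) := by
  unfold completeHomog
  simp only [Finset.mul_sum]
  rw [Finset.sum_sigma']
  refine Finset.sum_bij' (fun d _ => ⟨(d 0, ∑ i : Fin m, d i.succ), fun i => d i.succ⟩)
    (fun s _ => Fin.cons s.1.1 s.2) ?_ ?_ ?_ ?_ ?_
  · intro d hd
    rw [Finset.Nat.mem_antidiagonalTuple, Fin.sum_univ_succ] at hd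
    simp [Finset.Nat.mem_antidiagonalTuple, hd]
  · rintro ⟨⟨i, j⟩, e⟩ h
    simp only [Finset.mem_sigma, Finset.HasAntidiagonal.mem_antidiagonal, Finset.Nat.mem_antidiagonalTuple] at h
    simp [Finset.Nat.mem_antidiagonalTuple, Fin.sum_univ_succ, h]
  · intro d hd
    ext i
    refine Fin.cases ?_ (fun i => ?_) i <;> simp
  · rintro ⟨⟨i, j⟩, e⟩ h
    simp only [Finset.mem_sigma, Finset.HasAntidiagonal.mem_antidiagonal, Finset.Nat.mem_antidiagonalTuple] at h
    simp [h.2]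
  · intro d hd
    simp [Fin.prod_univ_succ]

/-- The divided difference of `t ^ n` at `n + 2` nodes vanishes: it is the coefficient of
`t ^ (n + 1)` in the Lagrange interpolant of `t ^ n`, which is `t ^ n` itself. -/
theorem sum_pow_div_eq_zero (n : ℕ) (x : Fin (n + 2) → ℂ) (hinj : Function.Injective x) :
    ∑ j, x j ^ n / ∏ l ∈ Finset.univ.erase j, (x j - x l) = 0 := by
  have hdeg : (Polynomial.X ^ n : Polynomial ℂ).degree
      < (Finset.univ : Finset (Fin (n + 2))).card := by
    rw [Polynomial.degree_X_pow, Finset.card_univ, Fintype.card_fin]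
    exact_mod_cast (by omega : n < n + 2)
  have h := Lagrange.coeff_eq_sum (s := Finset.univ) (v := x) hinj.injOn hdeg
  simp only [Polynomial.eval_pow, Polynomial.eval_X] at h
  rw [← h]
  simp [Polynomial.coeff_X_pow]

theorem prod_erase_succ {n : ℕ} (x : Fin (n + 1) → ℂ) (j : Fin n) :
    ∏ l ∈ Finset.univ.erase j.succ, (x j.succ - x l) =
      (x j.succ - x 0) * ∏ l ∈ Finset.univ.erase j, (x j.succ - x l.succ) := by
  have h : (Finset.univ.erase j.succ : Finset (Fin (n + 1))) =
      insert 0 ((Finset.univ.erase j).image Fin.succ) := by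
    ext i
    refine Fin.cases ?_ (fun i => ?_) i
    · simp [(Fin.succ_ne_zero j).symm]
    · simp
  rw [h, Finset.prod_insert (by simp), Finset.prod_image (by simp)]

theorem sum_antidiagonal_pow_mul_sub (a y : ℂ) (k : ℕ) :
    (∑ p ∈ Finset.HasAntidiagonal.antidiagonal k, a ^ p.1 * y ^ p.2) * (y - a) = y ^ (k + 1) - a ^ (k + 1) := by
  rw [Finset.Nat.sum_antidiagonal_eq_sum_range_succ (fun i j => a ^ i * y ^ j)]
  have h := geom_sum₂_mul a y (k + 1)
  simp only [Nat.add_sub_cancel] at h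
  linear_combination -h

/-- The identity for every `n`; at `n = 0` the product of differences is empty. -/
theorem sum_pow_div_eq_completeHomog (n : ℕ) : ∀ (k : ℕ) (x : Fin (n + 1) → ℂ),
    Function.Injective x →
    ∑ j, x j ^ (n + k) / ∏ l ∈ Finset.univ.erase j, (x j - x l) = completeHomog k x := by
  induction n with
  | zero =>
    intro k x _
    simp [completeHomog]
  | succ n ih =>
    intro k x hinj
    have hterm : ∀ j : Fin (n + 1),
        ∑ p ∈ Finset.HasAntidiagonal.antidiagonal k, x 0 ^ p.1 *
          (x j.succ ^ (n + p.2) / ∏ l ∈ Finset.univ.erase j, (x j.succ - x l.succ)) =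
        x j.succ ^ (n + 1 + k) / ∏ l ∈ Finset.univ.erase j.succ, (x j.succ - x l) -
        x 0 ^ (k + 1) *
          (x j.succ ^ n / ∏ l ∈ Finset.univ.erase j.succ, (x j.succ - x l)) := by
      intro j
      rw [prod_erase_succ]
      have h0 : x j.succ - x 0 ≠ 0 := sub_ne_zero.mpr (hinj.ne (Fin.succ_ne_zero j))
      have hP : ∏ l ∈ Finset.univ.erase j, (x j.succ - x l.succ) ≠ 0 := by
        refine Finset.prod_ne_zero_iff.mpr fun l hl => sub_ne_zero.mpr (hinj.ne ?_)
        exact fun h => (Finset.ne_of_mem_erase hl) (Fin.succ_injective _ h).symm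
      have hg := sum_antidiagonal_pow_mul_sub (x 0) (x j.succ) k
      generalize ∏ l ∈ Finset.univ.erase j, (x j.succ - x l.succ) = P at *
      have hs : ∑ p ∈ Finset.HasAntidiagonal.antidiagonal k, x 0 ^ p.1 * (x j.succ ^ (n + p.2) / P) =
          (∑ p ∈ Finset.HasAntidiagonal.antidiagonal k, x 0 ^ p.1 * x j.succ ^ p.2) * (x j.succ ^ n / P) := by
        rw [Finset.sum_mul]
        exact Finset.sum_congr rfl fun p _ => by ring
      rw [hs, eq_div_of_mul_eq h0 hg]
      field_simp
      ring
    have hz := sum_pow_div_eq_zero n x hinj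
    rw [Fin.sum_univ_succ] at hz
    rw [completeHomog_succ, Fin.sum_univ_succ]
    have hy : Function.Injective fun i : Fin (n + 1) => x i.succ :=
      hinj.comp (Fin.succ_injective _)
    simp_rw [← fun j => ih j _ hy, Finset.mul_sum]
    rw [Finset.sum_comm, Finset.sum_congr rfl fun j _ => hterm j, Finset.sum_sub_distrib,
      ← Finset.mul_sum]
    linear_combination x 0 ^ (k + 1) * hz

theorem stmt_2 (n : ℕ) (hn : 1 ≤ n) (k : ℕ) (x : Fin (n + 1) → ℂ)
    (hinj : Function.Injective x) :
    ∑ j, x j ^ (n + k) / ∏ l ∈ Finset.univ.erase j, (x j - x l) =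
      completeHomog k x :=
  sum_pow_div_eq_completeHomog n k x hinj
end

section
/- Let n ∈ ℕ with n ≥ 1, let s ∈ ℤ, and let x_0, x_1, …, x_n be pairwise distinct nonzero complex numbers. Define f(s, m) = ∑_{j=0}^{m} x_j^s / ∏_{l=0, l≠j}^{m} (x_j − x_l) for 1 ≤ m ≤ n, and f(s, 0) = x_0^s. Then f(s, n) = f(s−1, n−1) + f(s−1, n) · x_n. -/
/-!
The recurrence holds term by term. For `j < n` let `P` be the product of the `x j - x l` over
`l < n`, `l ≠ j`. Since `x j ^ s = x j ^ (s - 1) * ((x j - x n) + x n)`, dividing by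
`P * (x j - x n)` gives the `j`-th term of `f (s - 1) (n - 1)` plus `x n` times the `j`-th term of
`f (s - 1) n`. The term `j = n` does not occur in `f (s - 1) (n - 1)`, and there
`x n ^ s = x n ^ (s - 1) * x n` suffices.
-/

theorem stmt_3 (n : ℕ) (hn : 1 ≤ n) (s : ℤ) (x : ℕ → ℂ)
    (hinj : ∀ i ≤ n, ∀ j ≤ n, i ≠ j → x i ≠ x j)
    (hx0 : ∀ i ≤ n, x i ≠ 0)
    (f : ℤ → ℕ → ℂ)
    (hf : ∀ (t : ℤ) (m : ℕ), m ≤ n →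
      f t m = ∑ j ∈ Finset.range (m + 1),
        x j ^ t / ∏ l ∈ (Finset.range (m + 1)).erase j, (x j - x l)) :
    f s n = f (s - 1) (n - 1) + f (s - 1) n * x n := by
  obtain ⟨m, rfl⟩ : ∃ m, n = m + 1 := ⟨n - 1, by omega⟩
  have hpow : ∀ j ≤ m + 1, x j ^ s = x j ^ (s - 1) * x j := fun j hj => by
    rw [← zpow_add_one₀ (hx0 j hj), sub_add_cancel]
  rw [hf s _ le_rfl, hf (s - 1) _ le_rfl, Nat.add_sub_cancel, hf (s - 1) m (Nat.le_succ m),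
    Finset.sum_range_succ _ (m + 1), Finset.sum_range_succ _ (m + 1), add_mul, ← add_assoc,
    Finset.sum_mul, ← Finset.sum_add_distrib]
  congr 1
  · refine Finset.sum_congr rfl fun j hj => ?_
    have hjm : j < m + 1 := Finset.mem_range.mp hj
    have hd : x j - x (m + 1) ≠ 0 :=
      sub_ne_zero.mpr (hinj j hjm.le (m + 1) le_rfl hjm.ne)
    have hP : ∏ l ∈ (Finset.range (m + 1)).erase j, (x j - x l) ≠ 0 := by
      refine Finset.prod_ne_zero_iff.mpr fun l hl => ?_
      obtain ⟨hlj, hlm⟩ := Finset.mem_erase.mp hl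
      exact sub_ne_zero.mpr
        (hinj j hjm.le l (Finset.mem_range.mp hlm).le hlj.symm)
    have hprod : ∏ l ∈ (Finset.range (m + 1 + 1)).erase j, (x j - x l) =
        (x j - x (m + 1)) * ∏ l ∈ (Finset.range (m + 1)).erase j, (x j - x l) := by
      rw [Finset.range_add_one (n := m + 1), Finset.erase_insert_of_ne hjm.ne',
        Finset.prod_insert (by simp)]
    rw [hprod, hpow j hjm.le]
    generalize x j ^ (s - 1) = y
    field_simp
    ring
  · rw [hpow (m + 1) le_rfl, div_mul_eq_mul_div]
end

section
/- Let N ∈ ℕ with N ≥ 3, let ε ∈ {1, −1}, let λ ∈ ℂ, let a : ℤ → ℂ satisfy a_{n+N} = a_n for all n ∈ ℤ, and let y : ℤ → ℂ satisfy y_{n+N} = ε · y_n for all n ∈ ℤ as well as the discrete Hill (Jacobi) equation a_{n−1} y_{n−1} + a_n y_{n+1} = λ y_n for all n ∈ ℤ. Then ∑_{n=1}^{N} a_n (a_{n+1}^2 − a_{n−1}^2) y_n y_{n+1} = 0. -/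
/-!
The summand is a discrete derivative. Write `A n = a n ^ 2 * y n ^ 2`, `u n = a n * y n * y (n + 1)`
and `c n = a n ^ 3 * y n * y (n + 1)`. The Hill equation at `n + 1` and at `n`, used to eliminate
`a n * y n` and `a n * y (n + 1)` respectively, turns the summand into
`lam * (A (n + 1) - a (n - 1) ^ 2 * y n ^ 2) - c (n + 1) + c (n - 1)`. Multiplying the Hill equation
at `n - 1` by `a (n - 1) * y n - a (n - 2) * y (n - 2)` gives
`a (n - 1) ^ 2 * y n ^ 2 = A (n - 2) + lam * (u (n - 1) - u (n - 2))`. Hence the summand is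
`G (n + 1) - G n` for the function `hillPotential` below, which is quadratic in `y` and therefore
`N`-periodic because `ε ^ 2 = 1`; the sum over one period telescopes to `0`.
-/

/-- The function `G` whose forward difference is the summand: it equals
`lam * (A n + A (n - 1) + A (n - 2)) - lam ^ 2 * u (n - 2) - c n - c (n - 1)`, where
`A n = a n ^ 2 * y n ^ 2`, `u n = a n * y n * y (n + 1)` and `c n = a n ^ 3 * y n * y (n + 1)`. -/
def hillPotential (lam : ℂ) (a y : ℤ → ℂ) (n : ℤ) : ℂ :=
  lam * (a n ^ 2 * y n ^ 2 + a (n - 1) ^ 2 * y (n - 1) ^ 2 + a (n - 2) ^ 2 * y (n - 2) ^ 2)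
    - lam ^ 2 * (a (n - 2) * y (n - 2) * y (n - 1))
    - a n ^ 3 * y n * y (n + 1) - a (n - 1) ^ 3 * y (n - 1) * y n

theorem hillPotential_succ_sub (lam : ℂ) (a y : ℤ → ℂ)
    (hill : ∀ n : ℤ, a (n - 1) * y (n - 1) + a n * y (n + 1) = lam * y n) (n : ℤ) :
    hillPotential lam a y (n + 1) - hillPotential lam a y n =
      a n * (a (n + 1) ^ 2 - a (n - 1) ^ 2) * y n * y (n + 1) := by
  have h0 := hill n
  have h1 := hill (n + 1)
  have h2 := hill (n - 1)
  rw [show n + 1 - 1 = n by ring, show n + 1 + 1 = n + 2 by ring] at h1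
  rw [show n - 1 - 1 = n - 2 by ring, show n - 1 + 1 = n by ring] at h2
  simp only [hillPotential, show n + 1 - 1 = n by ring, show n + 1 + 1 = n + 2 by ring,
    show n + 1 - 2 = n - 1 by ring]
  linear_combination (-(a (n + 1) ^ 2 * y (n + 1))) * h1 + (a (n - 1) ^ 2 * y n) * h0
    + lam * (a (n - 1) * y n - a (n - 2) * y (n - 2)) * h2

theorem hillPotential_add_period (N : ℕ) (ε : ℂ) (hε : ε = 1 ∨ ε = -1)
    (lam : ℂ) (a y : ℤ → ℂ) (ha : ∀ n : ℤ, a (n + N) = a n)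
    (hy : ∀ n : ℤ, y (n + N) = ε * y n) (n : ℤ) :
    hillPotential lam a y (n + N) = hillPotential lam a y n := by
  simp only [hillPotential, show n + (N : ℤ) - 1 = n - 1 + N by ring,
    show n + (N : ℤ) - 2 = n - 2 + N by ring, show n + (N : ℤ) + 1 = n + 1 + N by ring, ha, hy]
  rcases hε with rfl | rfl <;> ring

theorem sum_Icc_int_telescope (G : ℤ → ℂ) (N : ℕ) :
    ∑ n ∈ Finset.Icc (1 : ℤ) (N : ℤ), (G (n + 1) - G n) = G (1 + N) - G 1 := by
  induction N with
  | zero => simp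
  | succ k ih =>
    have hIcc : Finset.Icc (1 : ℤ) ((k + 1 : ℕ) : ℤ)
        = insert ((k : ℤ) + 1) (Finset.Icc (1 : ℤ) (k : ℤ)) := by
      ext m
      simp only [Finset.mem_Icc, Finset.mem_insert]
      omega
    rw [hIcc, Finset.sum_insert (by simp), ih]
    push_cast
    rw [show (1 : ℤ) + (k + 1) = k + 1 + 1 by ring, show (1 : ℤ) + k = k + 1 by ring]
    ring

theorem stmt_10 (N : ℕ) (hN : 3 ≤ N) (ε : ℂ) (hε : ε = 1 ∨ ε = -1)
    (lam : ℂ) (a y : ℤ → ℂ)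
    (ha : ∀ n : ℤ, a (n + N) = a n)
    (hy : ∀ n : ℤ, y (n + N) = ε * y n)
    (hill : ∀ n : ℤ, a (n - 1) * y (n - 1) + a n * y (n + 1) = lam * y n) :
    ∑ n ∈ Finset.Icc (1 : ℤ) (N : ℤ),
      a n * (a (n + 1) ^ 2 - a (n - 1) ^ 2) * y n * y (n + 1) = 0 := by
  simp only [← hillPotential_succ_sub lam a y hill]
  rw [sum_Icc_int_telescope, hillPotential_add_period N ε hε lam a y ha hy, sub_self]
end
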